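/- For every β > 0 one has the inclusions R_{β+} ⊆ R*_β ⊆ R_β, where R_{β+} = ⋃_{γ>β} R_γ. That is: (i) every finite Borel measure on 𝕋 that is γ-regular for some γ > β belongs to R*_β; (ii) every measure in R*_β is β-regular. -/

import Mathlib

open MeasureTheory Real Filter Set

noncomputable section

instance : Fact (0 < 2 * π) := ⟨by positivity⟩

/-- `u ↦ |sin(u/2)|`, as a function on the circle. -/
def sinHalfAbs : AddCircle (2 * π) → ℝ :=
  Function.Periodic.lift (f := fun u => |Real.sin (u / 2)|)
    (fun x => by
      have h : (x + 2 * π) / 2 = x / 2 + π := by ring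
      simp only [h, Real.sin_add_pi, abs_neg])

/-- The `β`-energy `I_β(σ) = ∬ |sin((t−s)/2)|^{−β} dσ(t) dσ(s)`. -/
def rieszEnergy (β : ℝ) (σ : Measure (AddCircle (2 * π))) : ENNReal :=
  ∫⁻ t, ∫⁻ s, (ENNReal.ofReal (sinHalfAbs (t - s))) ^ (-β) ∂σ ∂σ

/-- `σ` is `β`-regular: `σ = Σ σ_i` with `σ_i` restrictions of `σ` to pairwise disjoint
Borel sets and `I_β(σ_i) < ∞` for every `i`. -/
def rieszRegular (β : ℝ) (σ : Measure (AddCircle (2 * π))) : Prop :=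
  ∃ A : ℕ → Set (AddCircle (2 * π)), (∀ i, MeasurableSet (A i)) ∧
    (Pairwise fun i j => Disjoint (A i) (A j)) ∧
    σ = Measure.sum (fun i => σ.restrict (A i)) ∧
    (∀ i, rieszEnergy β (σ.restrict (A i)) < ⊤)

/-- `σ ∈ R*_β`: for every `ε > 0` there are `γ > β` and a compact `K` with `σ(Kᶜ) < ε` such
that the lower local dimension of `σ|_K` is at least `γ` at every point of `K`. -/
def rieszRegularStar (β : ℝ) (σ : Measure (AddCircle (2 * π))) : Prop :=
  ∀ ε : ℝ, 0 < ε → ∃ γ : ℝ, β < γ ∧ ∃ K : Set (AddCircle (2 * π)), IsCompact K ∧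
    σ Kᶜ < ENNReal.ofReal ε ∧
    ∀ x ∈ K, γ ≤ Filter.liminf
      (fun r : ℝ => Real.log ((σ.restrict K) (Metric.ball x r)).toReal / Real.log r)
      (nhdsWithin 0 (Set.Ioi 0))

/-!
The argument takes place in a metric space `X`, where `|sin ((t - s) / 2)|` is replaced by the
comparable kernel `dist t s`.

If the `γ`-potential `∫ dist x y ^ (-γ) dμ(y)` is finite at `x`, then Markov's inequality gives
`μ (B(x, r)) ≤ C r ^ γ`; conversely a bound `μ (B(x, r)) ≤ C r ^ α` with `α > β` makes the
`β`-potential at `x` finite, by the layer cake formula. A measure is `β`-regular precisely when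
almost all of the space is covered by countably many sets `K` such that `μ|_K` has finite
`β`-potential on `K`, and this yields both inclusions, up to one point.

The lower local dimension is a `liminf` in `ℝ`, so it carries information only if the logarithmic
quotient does not tend to `∞`, i.e. if `μ|_K (B(x, r)) ≥ c r ^ k` for some `k` along a sequence
`r → 0`. To secure this, cover `X` at scale `2⁻ⁿ` by `O(2^{dn})` balls and remove from `K`
successively each ball that meets what is left of `K` in mass at most `c 2^{-(d+1)n}`: the removed
mass is `O(c)`, and no ball meeting the remaining compact set is light.
-/

open scoped ENNReal Topology

lemma measure_biUnion_le_of_forall_finset {X ι : Type*} [MeasurableSpace X] [Countable ι]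
    {μ : Measure X} {U : ι → Set X} {S : Set ι} {a : ℝ≥0∞}
    (h : ∀ F : Finset ι, ↑F ⊆ S → μ (⋃ i ∈ F, U i) ≤ a) : μ (⋃ i ∈ S, U i) ≤ a := by
  have hdirected : Directed (· ⊆ ·) fun F : Finset S => ⋃ i ∈ F, U i :=
    Monotone.directed_le fun _ _ hFG => biUnion_subset_biUnion_left hFG
  rw [biUnion_eq_iUnion, iUnion_eq_iUnion_finset, hdirected.measure_iUnion]
  refine iSup_le fun F => ?_
  simpa using h (F.map (Function.Embedding.subtype _)) (by simp)

lemma exists_biUnion_le_tsum_and_lt_diff {X ι : Type*} [MeasurableSpace X] [Countable ι]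
    (μ : Measure X) (U : ι → Set X) (w : ι → ℝ≥0∞) :
    ∃ S : Set ι, μ (⋃ i ∈ S, U i) ≤ ∑' i, w i ∧ ∀ i ∉ S, w i < μ (U i \ ⋃ j ∈ S, U j) := by
  have chain_bound (c : Set (Set ι)) (hc : c ⊆ {S | μ (⋃ i ∈ S, U i) ≤ ∑' i : S, w i})
      (hchain : IsChain (· ⊆ ·) c) (hne : c.Nonempty) :
      μ (⋃ i ∈ ⋃₀ c, U i) ≤ ∑' i : ⋃₀ c, w i := by
    refine measure_biUnion_le_of_forall_finset fun F hF => ?_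
    obtain ⟨T, hTc, hFT⟩ := hchain.directedOn.exists_mem_subset_of_finite_of_subset_sUnion hne
      F.finite_toSet hF
    exact (measure_mono (biUnion_subset_biUnion_left hFT)).trans <| (hc hTc).trans <|
      ENNReal.tsum_mono_subtype w (subset_sUnion_of_mem hTc)
  obtain ⟨S, -, hS, hmax⟩ := zorn_subset_nonempty {S : Set ι | μ (⋃ i ∈ S, U i) ≤ ∑' i : S, w i}
    (fun c hc hchain hne => ⟨⋃₀ c, chain_bound c hc hchain hne, fun _ => subset_sUnion_of_mem⟩)
    ∅ (by simp)
  refine ⟨S, hS.trans (ENNReal.tsum_comp_le_tsum_of_injective Subtype.val_injective w), ?_⟩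
  intro i hi
  by_contra! hlight
  have hsum : ∑' j : (insert i S : Set ι), w j = w i + ∑' j : S, w j := by
    rw [← singleton_union, ENNReal.summable.tsum_union_disjoint (by simpa using hi)
      ENNReal.summable, tsum_singleton]
  have hinsert : μ (⋃ j ∈ insert i S, U j) ≤ ∑' j : (insert i S : Set ι), w j := by
    rw [hsum, biUnion_insert, ← sdiff_union_self]
    exact (measure_union_le _ _).trans (add_le_add hlight hS)
  exact hi (hmax hinsert (subset_insert i S) (mem_insert i S))

lemma exists_isCompact_subset_le_measure_ball {X : Type*} [PseudoMetricSpace X]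
    [MeasurableSpace X] [OpensMeasurableSpace X] (μ : Measure X) {K : Set X} (hK : IsCompact K)
    {s : ℕ → Finset X} {r : ℕ → ℝ}
    (hs : ∀ n x, ∃ y ∈ s n, dist x y < r n) (w : ℕ → ℝ≥0∞) :
    ∃ K' ⊆ K, IsCompact K' ∧ μ (K \ K') ≤ ∑' n, (s n).card * w n ∧
      ∀ x ∈ K', ∀ n, w n ≤ μ.restrict K' (Metric.ball x (2 * r n)) := by
  let U (p : Σ n, s n) : Set X := Metric.ball p.2 (r p.1)
  obtain ⟨S, hS, hheavy⟩ :=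
    exists_biUnion_le_tsum_and_lt_diff (μ.restrict K) U (fun p => w p.1)
  have hopen : IsOpen (⋃ p ∈ S, U p) := isOpen_biUnion fun _ _ => Metric.isOpen_ball
  refine ⟨K \ ⋃ p ∈ S, U p, sdiff_subset, hK.diff hopen, ?_, fun x hx n => ?_⟩
  · rw [sdiff_sdiff_right_self, inter_comm, ← Measure.restrict_apply hopen.measurableSet]
    refine hS.trans_eq ?_
    simp only [ENNReal.tsum_sigma', tsum_fintype, Finset.sum_const, Finset.card_univ,
      Fintype.card_coe, nsmul_eq_mul]
  · obtain ⟨y, hy, hxy⟩ := hs n x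
    let p : Σ n, s n := ⟨n, y, hy⟩
    have hpS : p ∉ S := fun hp => hx.2 (mem_biUnion hp hxy)
    refine (hheavy p hpS).le.trans ?_
    rw [Measure.restrict_apply (Metric.isOpen_ball.measurableSet.diff hopen.measurableSet),
      Measure.restrict_apply Metric.isOpen_ball.measurableSet]
    refine measure_mono fun z hz => ⟨Metric.mem_ball.2 ?_, hz.2, hz.1.2⟩
    have hzy : dist z y < r n := hz.1.1
    linarith [dist_triangle_right z x y]

section LogQuotient

variable {m : ℝ → ℝ} {α : ℝ}

lemma eventually_le_rpow_of_lt_liminf (hm : ∀ r, 0 ≤ m r) (hα : 0 ≤ α)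
    (h : α < liminf (fun r => log (m r) / log r) (𝓝[>] 0)) :
    ∀ᶠ r in 𝓝[>] 0, m r ≤ r ^ α := by
  rw [liminf_eq] at h
  -- For an empty set of lower bounds the supremum would be `0` by convention.
  have hne : {a | ∀ᶠ r in 𝓝[>] (0 : ℝ), a ≤ log (m r) / log r}.Nonempty := by
    by_contra hempty
    rw [not_nonempty_iff_eq_empty.1 hempty, Real.sSup_empty] at h
    exact h.not_ge hα
  obtain ⟨a, ha, hαa⟩ := exists_lt_of_lt_csSup hne h
  filter_upwards [ha, Ioo_mem_nhdsGT one_pos] with r hr hr01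
  rcases (hm r).eq_or_lt with h0 | hpos
  · exact h0 ▸ rpow_nonneg hr01.1.le α
  · rw [le_rpow_iff_log_le hpos hr01.1]
    exact (le_div_iff_of_neg (log_neg hr01.1 hr01.2)).1 (hαa.le.trans hr)

lemma le_liminf_log_div_log (hm : Monotone m) {γ C c : ℝ} {k : ℕ} (hα : α < γ) (hC : 0 < C)
    (hc : 0 < c) (hupper : ∀ᶠ r in 𝓝[>] 0, m r ≤ C * r ^ γ)
    (hlower : ∃ᶠ r in 𝓝[>] 0, c * r ^ k ≤ m r) :
    α ≤ liminf (fun r => log (m r) / log r) (𝓝[>] 0) := by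
  have hpos (r : ℝ) (hr : 0 < r) : 0 < m r := by
    obtain ⟨t, hct, ht0, htr⟩ := (hlower.and_eventually (Ioo_mem_nhdsGT hr)).exists
    have : 0 < c * t ^ k := by positivity
    exact this.trans_le (hct.trans (hm htr.le))
  refine le_liminf_of_le (IsCoboundedUnder.of_frequently_le (a := k + 1) ?_) ?_
  · have hlogc : ∀ᶠ r in 𝓝[>] 0, log r ≤ log c := tendsto_log_nhdsGT_zero.eventually_le_atBot _
    refine (hlower.and_eventually (hlogc.and (Ioo_mem_nhdsGT one_pos))).mono ?_
    rintro r ⟨hmr, hlogr, hr0, hr1⟩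
    rw [div_le_iff_of_neg (log_neg hr0 hr1)]
    have := log_le_log (by positivity) hmr
    rw [log_mul hc.ne' (by positivity), log_pow] at this
    linarith
  · have hlog : ∀ᶠ r in 𝓝[>] 0, (γ - α) * log r ≤ -log C :=
      (tendsto_log_nhdsGT_zero.const_mul_atBot (sub_pos.2 hα)).eventually_le_atBot _
    filter_upwards [hupper, Ioo_mem_nhdsGT one_pos, hlog] with r hmr ⟨hr0, hr1⟩ hlogr
    rw [le_div_iff_of_neg (log_neg hr0 hr1)]
    have := log_le_log (hpos r hr0) hmr
    rw [log_mul hC.ne' (rpow_pos_of_pos hr0 γ).ne', log_rpow hr0] at this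
    linarith

end LogQuotient

lemma lintegral_ofReal_lt_top_of_meas_lt_le_rpow {X : Type*} [MeasurableSpace X] {μ : Measure X}
    [IsFiniteMeasure μ] {f : X → ℝ} (hf : Measurable f) (hf0 : ∀ x, 0 ≤ f x) {C p : ℝ} (hp : 1 < p)
    (h : ∀ᶠ t in atTop, μ {x | t < f x} ≤ ENNReal.ofReal (C * t ^ (-p))) :
    ∫⁻ x, ENNReal.ofReal (f x) ∂μ < ∞ := by
  obtain ⟨T, hT⟩ := eventually_atTop.1 (h.and (eventually_gt_atTop 0))
  have hT0 : 0 < T := (hT T le_rfl).2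
  have hhead : ∫⁻ t in Ioc 0 T, μ {x | t < f x} < ∞ :=
    (setLIntegral_mono measurable_const fun _ _ => measure_mono (subset_univ _)).trans_lt <| by
      simpa using ENNReal.mul_lt_top (measure_lt_top μ univ) ENNReal.ofReal_lt_top
  have htail : ∫⁻ t in Ioi T, μ {x | t < f x} < ∞ :=
    (setLIntegral_mono' measurableSet_Ioi fun t ht => (hT t (le_of_lt ht)).1).trans_lt
      ((integrableOn_Ioi_rpow_of_lt (neg_lt_neg hp) hT0).const_mul C).lintegral_lt_top
  calc ∫⁻ x, ENNReal.ofReal (f x) ∂μ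
      = ∫⁻ t in Ioc 0 T ∪ Ioi T, μ {x | t < f x} := by
        rw [lintegral_eq_lintegral_meas_lt μ (ae_of_all _ hf0) hf.aemeasurable,
          Ioc_union_Ioi_eq_Ioi hT0.le]
    _ ≤ (∫⁻ t in Ioc 0 T, μ {x | t < f x}) + ∫⁻ t in Ioi T, μ {x | t < f x} :=
        lintegral_union_le _ _ _
    _ < ∞ := ENNReal.add_lt_top.2 ⟨hhead, htail⟩

lemma antitone_ennreal_rpow_neg {β : ℝ} (hβ : 0 ≤ β) : Antitone fun a : ℝ≥0∞ => a ^ (-β) := by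
  intro a b hab
  simp only [ENNReal.rpow_neg]
  gcongr

/-- The Riesz potential `x ↦ ∫ dist x y ^ (-β) dμ(y)` of a measure on a metric space. The kernel is
formed in `ℝ≥0∞`, so that it is `∞` on the diagonal when `β > 0`. -/
def metricPotential {X : Type*} [PseudoMetricSpace X] [MeasurableSpace X] (β : ℝ) (μ : Measure X)
    (x : X) : ℝ≥0∞ :=
  ∫⁻ y, edist x y ^ (-β) ∂μ

section Potential

variable {X : Type*} [PseudoMetricSpace X] [MeasurableSpace X] {β : ℝ} {μ ν : Measure X} {x : X}

lemma metricPotential_mono_measure (h : μ ≤ ν) : metricPotential β μ x ≤ metricPotential β ν x :=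
  lintegral_mono' h le_rfl

lemma metricPotential_restrict_biUnion_lt_top {ι : Type*} {s : Finset ι} {K : ι → Set X}
    (h : ∀ i ∈ s, metricPotential β (μ.restrict (K i)) x < ∞) :
    metricPotential β (μ.restrict (⋃ i ∈ s, K i)) x < ∞ := by
  classical
  induction s using Finset.induction_on with
  | empty => simp [metricPotential]
  | insert i s _ ih =>
    rw [Finset.set_biUnion_insert]
    exact (lintegral_union_le _ _ _).trans_lt <| ENNReal.add_lt_top.2
      ⟨h i (Finset.mem_insert_self i s), ih fun j hj => h j (Finset.mem_insert_of_mem hj)⟩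

variable [OpensMeasurableSpace X]

lemma measurable_metricPotential [SecondCountableTopology X] [SFinite μ] :
    Measurable (metricPotential β μ) :=
  (measurable_edist.pow_const (-β)).lintegral_prod_right'

lemma metricPotential_restrict_lt_top_of_notMem [IsFiniteMeasure μ] (hβ : 0 ≤ β) {F : Set X}
    (hF : IsClosed F) (hx : x ∉ F) : metricPotential β (μ.restrict F) x < ∞ := by
  obtain ⟨ρ, hρ, hball⟩ := EMetric.isOpen_iff.1 hF.isOpen_compl x hx
  have hker (y : X) (hy : y ∈ F) : edist x y ^ (-β) ≤ ρ ^ (-β) := by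
    refine antitone_ennreal_rpow_neg hβ (not_lt.1 fun hlt => ?_)
    exact hball (Metric.mem_eball'.2 hlt) hy
  refine (setLIntegral_mono' hF.measurableSet hker).trans_lt (setLIntegral_const_lt_top _ ?_)
  simp [ENNReal.rpow_neg, hρ.ne', hβ]

lemma measure_ball_le_metricPotential_mul (hβ : 0 ≤ β) (x : X) {r : ℝ} (hr : 0 < r) :
    μ (Metric.ball x r) ≤ metricPotential β μ x * ENNReal.ofReal (r ^ β) := by
  have h0 : ENNReal.ofReal (r ^ β) ≠ 0 := by simpa using rpow_pos_of_pos hr β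
  have hmarkov : (ENNReal.ofReal (r ^ β))⁻¹ * μ (Metric.ball x r) ≤ metricPotential β μ x := by
    rw [← ENNReal.ofReal_rpow_of_pos hr, ← ENNReal.rpow_neg, ← setLIntegral_const]
    refine (setLIntegral_mono' Metric.isOpen_ball.measurableSet fun y hy => ?_).trans
      (setLIntegral_le_lintegral _ _)
    refine antitone_ennreal_rpow_neg hβ ?_
    rw [edist_comm, edist_dist]
    exact ENNReal.ofReal_le_ofReal (le_of_lt hy)
  rwa [mul_comm (metricPotential β μ x),
    ← ENNReal.inv_mul_le_iff h0 ENNReal.ofReal_ne_top]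

lemma metricPotential_lt_top_of_measure_ball_le [IsFiniteMeasure μ] (hβ : 0 < β) {α C : ℝ}
    (hα : β < α) (h : ∀ᶠ r in 𝓝[>] 0, μ (Metric.ball x r) ≤ ENNReal.ofReal (C * r ^ α)) :
    metricPotential β μ x < ∞ := by
  have hnull : μ {y | dist x y = 0} = 0 := by
    have hlim : Tendsto (fun r : ℝ => ENNReal.ofReal (C * r ^ α)) (𝓝[>] 0) (𝓝 0) := by
      have hα0 : 0 < α := hβ.trans hα
      have := ((continuousAt_rpow_const 0 α (Or.inr hα0.le)).const_mul C).tendsto.mono_left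
        (nhdsWithin_le_nhds (s := Ioi 0))
      simpa [zero_rpow hα0.ne'] using ENNReal.tendsto_ofReal this
    refine le_antisymm (ge_of_tendsto hlim ?_) zero_le
    filter_upwards [h, self_mem_nhdsWithin] with r hr hr0
    exact (measure_mono fun y hy => Metric.mem_ball'.2 (hy.trans_lt hr0)).trans hr
  have hker : ∀ᵐ y ∂μ, edist x y ^ (-β) = ENNReal.ofReal (dist x y ^ (-β)) := by
    filter_upwards [measure_eq_zero_iff_ae_notMem.1 hnull] with y hy
    rw [edist_dist, ENNReal.ofReal_rpow_of_pos (dist_nonneg.lt_of_ne' hy)]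
  rw [metricPotential, lintegral_congr_ae hker]
  refine lintegral_ofReal_lt_top_of_meas_lt_le_rpow (p := α / β) (C := C) (by fun_prop)
    (fun y => rpow_nonneg dist_nonneg _) ((one_lt_div hβ).2 hα) ?_
  have hradius : Tendsto (fun t : ℝ => t ^ (-β)⁻¹) atTop (𝓝[>] 0) := by
    refine tendsto_nhdsWithin_iff.2 ⟨?_, ?_⟩
    · simpa [inv_neg] using tendsto_rpow_neg_atTop (inv_pos.2 hβ)
    · filter_upwards [eventually_gt_atTop 0] with t ht using rpow_pos_of_pos ht _
  filter_upwards [hradius.eventually h, eventually_gt_atTop 0] with t ht ht0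
  have hsub : {y | t < dist x y ^ (-β)} ⊆ Metric.ball x (t ^ (-β)⁻¹) := by
    intro y hy
    have hdist : 0 < dist x y := dist_nonneg.lt_of_ne' fun h0 => by
      rw [mem_ofPred_eq, h0, zero_rpow (by linarith)] at hy
      exact hy.not_gt ht0
    exact Metric.mem_ball'.2 ((lt_rpow_inv_iff_of_neg hdist ht0 (by linarith)).2 hy)
  refine (measure_mono hsub).trans (ht.trans_eq ?_)
  rw [← rpow_mul ht0.le, inv_neg, neg_mul, inv_mul_eq_div]

end Potential

lemma exists_isCompact_measure_compl_biUnion_lt {X ι : Type*} [TopologicalSpace X] [T2Space X]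
    [MeasurableSpace X] [OpensMeasurableSpace X] [Countable ι] {μ : Measure X} [IsFiniteMeasure μ]
    [μ.InnerRegularCompactLTTop] {G : ι → Set X} (hG : ∀ i, MeasurableSet (G i))
    (hcov : μ (⋃ i, G i)ᶜ = 0) {ε : ℝ≥0∞} (hε : ε ≠ 0) :
    ∃ (K : ι → Set X) (s : Finset ι), (∀ i, K i ⊆ G i) ∧ (∀ i, IsCompact (K i)) ∧
      μ (⋃ i ∈ s, K i)ᶜ < ε := by
  obtain ⟨δ, hδ, hδε⟩ := ENNReal.exists_pos_sum_of_countable' hε ι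
  choose K hKG hK hKδ using fun i =>
    (hG i).exists_isCompact_sdiff_lt (measure_ne_top μ _) (hδ i).ne'
  have hloss : (⋃ i, K i)ᶜ ⊆ (⋃ i, G i)ᶜ ∪ ⋃ i, G i \ K i := by
    intro x hx
    simp only [mem_compl_iff, mem_iUnion, not_exists, mem_union, Set.mem_sdiff] at hx ⊢
    by_cases h : ∃ i, x ∈ G i
    · exact Or.inr (h.imp fun i hi => ⟨hi, hx i⟩)
    · exact Or.inl (not_exists.1 h)
  have htotal : μ (⋃ i, K i)ᶜ < ε := calc
    μ (⋃ i, K i)ᶜ ≤ μ (⋃ i, G i)ᶜ + ∑' i, μ (G i \ K i) :=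
      (measure_mono hloss).trans <| (measure_union_le _ _).trans <| by
        gcongr
        exact measure_iUnion_le _
    _ ≤ 0 + ∑' i, δ i := add_le_add hcov.le (ENNReal.tsum_le_tsum fun i => (hKδ i).le)
    _ < ε := by rwa [zero_add]
  have hlim : Tendsto (fun s : Finset ι => μ (⋃ i ∈ s, K i)ᶜ) atTop (𝓝 (μ (⋃ i, K i)ᶜ)) := by
    rw [iUnion_eq_iUnion_finset K, compl_iUnion]
    refine tendsto_measure_iInter_atTop (fun s => ?_)
      (fun s t hst => compl_subset_compl.2 (biUnion_subset_biUnion_left hst))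
      ⟨∅, measure_ne_top μ _⟩
    exact (s.isCompact_biUnion fun i _ => hK i).measurableSet.compl.nullMeasurableSet
  obtain ⟨s, hs⟩ := (hlim.eventually_lt_const htotal).exists
  exact ⟨K, s, hKG, hK, hs⟩

/-- The Riesz energy `∬ dist x y ^ (-β) dμ(y) dμ(x)` of a measure on a metric space. -/
def metricEnergy {X : Type*} [PseudoMetricSpace X] [MeasurableSpace X] (β : ℝ)
    (μ : Measure X) : ℝ≥0∞ :=
  ∫⁻ x, metricPotential β μ x ∂μ

/-- The analogue of `rieszRegular` on a metric space, for the energy with kernel `dist x y`: the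
measure is the sum of its restrictions to countably many disjoint sets, each of finite energy. -/
def MetricRegular {X : Type*} [PseudoMetricSpace X] [MeasurableSpace X] (β : ℝ)
    (μ : Measure X) : Prop :=
  ∃ A : ℕ → Set X, (∀ i, MeasurableSet (A i)) ∧ (Pairwise fun i j => Disjoint (A i) (A j)) ∧
    μ = Measure.sum (fun i => μ.restrict (A i)) ∧ ∀ i, metricEnergy β (μ.restrict (A i)) < ∞

section Regular

variable {X : Type*} {β : ℝ}

lemma metricEnergy_mono_measure [PseudoMetricSpace X] [MeasurableSpace X] {μ ν : Measure X}
    (h : μ ≤ ν) : metricEnergy β μ ≤ metricEnergy β ν :=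
  lintegral_mono' h fun _ => metricPotential_mono_measure h

lemma metricRegular_of_iUnion [PseudoMetricSpace X] [MeasurableSpace X] {μ : Measure X}
    {ι : Type*} [Countable ι] [Nonempty ι] {E : ι → Set X} (hE : ∀ i, MeasurableSet (E i))
    (hcov : μ (⋃ i, E i)ᶜ = 0) (hfin : ∀ i, metricEnergy β (μ.restrict (E i)) < ∞) :
    MetricRegular β μ := by
  obtain ⟨f, hf⟩ := exists_surjective_nat ι
  have hmeas := MeasurableSet.disjointed fun n => hE (f n)
  refine ⟨disjointed fun n => E (f n), hmeas, disjoint_disjointed _, ?_, fun n => ?_⟩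
  · rw [← Measure.restrict_iUnion (disjoint_disjointed _) hmeas, iUnion_disjointed,
      hf.iUnion_comp E]
    exact (Measure.restrict_eq_self_of_ae_mem (mem_ae_iff.2 hcov)).symm
  · exact (metricEnergy_mono_measure
      (Measure.restrict_mono_set μ (disjointed_subset _ n))).trans_lt (hfin (f n))

variable [PseudoMetricSpace X] [SecondCountableTopology X] [MeasurableSpace X]
  [OpensMeasurableSpace X] {μ : Measure X}

lemma MetricRegular.exists_disjoint_metricPotential_lt_top [SFinite μ] (h : MetricRegular β μ) :
    ∃ G : ℕ → Set X, (∀ i, MeasurableSet (G i)) ∧ (Pairwise fun i j => Disjoint (G i) (G j)) ∧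
      μ (⋃ i, G i)ᶜ = 0 ∧ ∀ i, ∀ x ∈ G i, metricPotential β (μ.restrict (G i)) x < ∞ := by
  obtain ⟨A, hA, hdisj, hsum, hfin⟩ := h
  let G (i : ℕ) : Set X := A i ∩ {x | metricPotential β (μ.restrict (A i)) x < ∞}
  have hG (i : ℕ) : MeasurableSet (G i) :=
    (hA i).inter (measurable_metricPotential measurableSet_Iio)
  refine ⟨G, hG, fun i j hij => (hdisj hij).mono inter_subset_left inter_subset_left, ?_,
    fun i x hx => (metricPotential_mono_measure
      (Measure.restrict_mono_set μ inter_subset_left)).trans_lt hx.2⟩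
  rw [hsum, Measure.sum_apply_eq_zero' (MeasurableSet.iUnion hG).compl]
  refine fun i => mem_ae_iff.1 ?_
  filter_upwards [ae_lt_top measurable_metricPotential (hfin i).ne, ae_restrict_mem (hA i)]
    with x hx hxA using mem_iUnion.2 ⟨i, hxA, hx⟩

variable [IsFiniteMeasure μ]

lemma metricEnergy_restrict_sublevel_lt_top {K : Set X} (hK : MeasurableSet K) {c : ℝ≥0∞}
    (hc : c ≠ ∞) :
    metricEnergy β (μ.restrict (K ∩ {x | metricPotential β (μ.restrict K) x ≤ c})) < ∞ := by
  have hmeas : MeasurableSet (K ∩ {x | metricPotential β (μ.restrict K) x ≤ c}) :=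
    hK.inter (measurable_metricPotential measurableSet_Iic)
  refine (setLIntegral_mono' hmeas fun x hx => ?_).trans_lt (setLIntegral_const_lt_top _ hc)
  exact (metricPotential_mono_measure (Measure.restrict_mono_set μ inter_subset_left)).trans hx.2

lemma metricRegular_of_metricPotential_lt_top {K : ℕ → Set X} (hK : ∀ n, MeasurableSet (K n))
    (hcov : μ (⋃ n, K n)ᶜ = 0)
    (hpot : ∀ n, ∀ x ∈ K n, metricPotential β (μ.restrict (K n)) x < ∞) : MetricRegular β μ := by
  let E (p : ℕ × ℕ) : Set X := K p.1 ∩ {x | metricPotential β (μ.restrict (K p.1)) x ≤ p.2}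
  have hKE : ⋃ n, K n ⊆ ⋃ p, E p := iUnion_subset fun n x hx => by
    obtain ⟨m, hm⟩ := ENNReal.exists_nat_gt (hpot n x hx).ne
    exact mem_iUnion.2 ⟨(n, m), hx, hm.le⟩
  exact metricRegular_of_iUnion (E := E)
    (fun p => (hK p.1).inter (measurable_metricPotential measurableSet_Iic))
    (measure_mono_null (compl_subset_compl.2 hKE) hcov)
    (fun p => metricEnergy_restrict_sublevel_lt_top (hK p.1) (ENNReal.natCast_ne_top p.2))

end Regular

lemma MetricRegular.exists_isCompact_metricPotential_lt_top {X : Type*} [MetricSpace X]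
    [SecondCountableTopology X] [MeasurableSpace X] [OpensMeasurableSpace X] {μ : Measure X}
    [IsFiniteMeasure μ] [μ.InnerRegularCompactLTTop] {β : ℝ} (hβ : 0 ≤ β)
    (h : MetricRegular β μ) {ε : ℝ≥0∞} (hε : ε ≠ 0) :
    ∃ K, IsCompact K ∧ μ Kᶜ < ε ∧ ∀ x ∈ K, metricPotential β (μ.restrict K) x < ∞ := by
  obtain ⟨G, hG, hdisj, hcov, hpot⟩ := h.exists_disjoint_metricPotential_lt_top
  obtain ⟨K, s, hKG, hK, hs⟩ := exists_isCompact_measure_compl_biUnion_lt hG hcov hε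
  refine ⟨⋃ i ∈ s, K i, s.isCompact_biUnion fun i _ => hK i, hs, fun x hx => ?_⟩
  obtain ⟨i, -, hxi⟩ := mem_iUnion₂.1 hx
  refine metricPotential_restrict_biUnion_lt_top fun j _ => ?_
  rcases eq_or_ne i j with rfl | hij
  · exact (metricPotential_mono_measure (Measure.restrict_mono_set μ (hKG i))).trans_lt
      (hpot i x (hKG i hxi))
  · exact metricPotential_restrict_lt_top_of_notMem hβ (hK j).isClosed
      (disjoint_left.1 ((hdisj hij).mono (hKG i) (hKG j)) hxi)

/-- The lower local dimension `liminf_{r → 0} log μ (B(x, r)) / log r`. The `liminf` is taken in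
`ℝ`, so it takes the junk value `0` when the quotient tends to `∞`, and also off the support of `μ`,
where `log 0 = 0`. -/
def lowerLocalDim {X : Type*} [PseudoMetricSpace X] [MeasurableSpace X] (μ : Measure X)
    (x : X) : ℝ :=
  liminf (fun r : ℝ => log (μ (Metric.ball x r)).toReal / log r) (𝓝[>] 0)

/-- The analogue of `rieszRegularStar` on a metric space: up to arbitrarily small mass, the measure
lives on compact sets on which the lower local dimension of its restriction exceeds `β`
uniformly. -/
def MetricRegularStar {X : Type*} [PseudoMetricSpace X] [MeasurableSpace X] (β : ℝ)
    (μ : Measure X) : Prop :=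
  ∀ ε : ℝ, 0 < ε → ∃ γ : ℝ, β < γ ∧ ∃ K : Set X, IsCompact K ∧ μ Kᶜ < ENNReal.ofReal ε ∧
    ∀ x ∈ K, γ ≤ lowerLocalDim (μ.restrict K) x

/-- The upper box dimension of `X` is finite: at every scale `r ≤ 1` the space has an `r`-net of
at most `C * r ^ (-d)` points. -/
def HasFiniteBoxDimension (X : Type*) [PseudoMetricSpace X] : Prop :=
  ∃ d C : ℕ, ∀ r : ℝ, 0 < r → r ≤ 1 →
    ∃ s : Finset X, s.card * r ^ d ≤ C ∧ ∀ x, ∃ y ∈ s, dist x y < r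

section LowerLocalDim

variable {X : Type*} [PseudoMetricSpace X] [MeasurableSpace X] [OpensMeasurableSpace X]
  {μ : Measure X} [IsFiniteMeasure μ] {x : X}

lemma metricPotential_lt_top_of_lt_lowerLocalDim {β : ℝ} (hβ : 0 < β)
    (h : β < lowerLocalDim μ x) : metricPotential β μ x < ∞ := by
  obtain ⟨α, hβα, hα⟩ := exists_between h
  refine metricPotential_lt_top_of_measure_ball_le (C := 1) hβ hβα ?_
  filter_upwards [eventually_le_rpow_of_lt_liminf (fun _ => ENNReal.toReal_nonneg)
    (hβ.trans hβα).le hα] with r hr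
  rw [one_mul]
  exact (ENNReal.le_ofReal_iff_toReal_le (measure_ne_top μ _)
    (ENNReal.toReal_nonneg.trans hr)).2 hr

lemma le_lowerLocalDim_of_metricPotential_lt_top {α γ c : ℝ} {k : ℕ} (hγ : 0 ≤ γ) (hα : α < γ)
    (hpot : metricPotential γ μ x < ∞) (hc : 0 < c)
    (hlower : ∃ᶠ r in 𝓝[>] 0, c * r ^ k ≤ (μ (Metric.ball x r)).toReal) :
    α ≤ lowerLocalDim μ x := by
  refine le_liminf_log_div_log (C := (metricPotential γ μ x).toReal + 1)
    (fun r s hrs => ENNReal.toReal_mono (measure_ne_top μ _)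
      (measure_mono (Metric.ball_subset_ball hrs))) hα (by positivity) hc ?_ hlower
  filter_upwards [self_mem_nhdsWithin] with r (hr : 0 < r)
  have hball := ENNReal.toReal_mono (ENNReal.mul_ne_top hpot.ne ENNReal.ofReal_ne_top)
    (measure_ball_le_metricPotential_mul hγ x hr)
  rw [ENNReal.toReal_mul, ENNReal.toReal_ofReal (by positivity)] at hball
  exact hball.trans (by gcongr; linarith)

end LowerLocalDim

lemma HasFiniteBoxDimension.secondCountableTopology {X : Type*} [PseudoMetricSpace X]
    (hX : HasFiniteBoxDimension X) : SecondCountableTopology X := by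
  obtain ⟨d, C, hs⟩ := hX
  refine Metric.secondCountable_of_almost_dense_set fun ε hε => ?_
  obtain ⟨s, -, hs⟩ := hs (min ε 1) (by positivity) (min_le_right _ _)
  refine ⟨s, s.countable_toSet, fun x => ?_⟩
  obtain ⟨y, hy, hxy⟩ := hs x
  exact ⟨y, hy, hxy.le.trans (min_le_left _ _)⟩

lemma tsum_natCast_mul_ofReal_half_pow_le {a : ℕ → ℕ} {d C : ℕ} {ε : ℝ} (hε : 0 ≤ ε)
    (ha : ∀ n, a n * ((1 / 2 : ℝ) ^ n) ^ d ≤ C) :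
    ∑' n, a n * ENNReal.ofReal (ε / (2 * (C + 1)) * ((1 / 2) ^ n) ^ (d + 1)) ≤
      ENNReal.ofReal ε := by
  have hterm (n : ℕ) : a n * ENNReal.ofReal (ε / (2 * (C + 1)) * ((1 / 2) ^ n) ^ (d + 1)) ≤
      ENNReal.ofReal (ε / 2 / 2 ^ n) := by
    rw [← ENNReal.ofReal_natCast, ← ENNReal.ofReal_mul (by positivity)]
    refine ENNReal.ofReal_le_ofReal ?_
    calc a n * (ε / (2 * (C + 1)) * ((1 / 2) ^ n) ^ (d + 1))
        = a n * ((1 / 2) ^ n) ^ d * (ε / (2 * (C + 1)) * (1 / 2) ^ n) := by ring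
      _ ≤ (C + 1) * (ε / (2 * (C + 1)) * (1 / 2) ^ n) := by
        gcongr
        exact (ha n).trans (le_add_of_nonneg_right zero_le_one)
      _ = ε / 2 / 2 ^ n := by
        rw [one_div, inv_pow]
        field_simp
  refine (ENNReal.tsum_le_tsum hterm).trans_eq ?_
  rw [← ENNReal.ofReal_tsum_of_nonneg (fun n => by positivity) (summable_geometric_two' ε),
    tsum_geometric_two' ε]

lemma HasFiniteBoxDimension.exists_isCompact_subset_frequently_le_measure_ball {X : Type*}
    [PseudoMetricSpace X] [MeasurableSpace X] [OpensMeasurableSpace X]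
    (hX : HasFiniteBoxDimension X) (μ : Measure X) [IsFiniteMeasure μ] {K : Set X}
    (hK : IsCompact K) {ε : ℝ} (hε : 0 < ε) :
    ∃ K' ⊆ K, IsCompact K' ∧ μ (K \ K') ≤ ENNReal.ofReal ε ∧ ∃ c > 0, ∃ k : ℕ, ∀ x ∈ K',
      ∃ᶠ r in 𝓝[>] 0, c * r ^ k ≤ (μ.restrict K' (Metric.ball x r)).toReal := by
  obtain ⟨d, C, hnet⟩ := hX
  have hr (n : ℕ) : (0 : ℝ) < (1 / 2) ^ n := by positivity
  choose s hcard hs using fun n : ℕ =>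
    hnet ((1 / 2) ^ n) (hr n) (pow_le_one₀ (by norm_num) (by norm_num))
  obtain ⟨K', hK'K, hK', hloss, hball⟩ := exists_isCompact_subset_le_measure_ball μ hK hs
    fun n => ENNReal.ofReal (ε / (2 * (C + 1)) * ((1 / 2) ^ n) ^ (d + 1))
  refine ⟨K', hK'K, hK', hloss.trans (tsum_natCast_mul_ofReal_half_pow_le hε.le hcard),
    ε / (2 * (C + 1)) / 2 ^ (d + 1), by positivity, d + 1, fun x hx => ?_⟩
  have hradius : Tendsto (fun n : ℕ => 2 * (1 / 2 : ℝ) ^ n) atTop (𝓝[>] 0) := by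
    refine tendsto_nhdsWithin_iff.2 ⟨?_, Eventually.of_forall fun n => mul_pos two_pos (hr n)⟩
    simpa using (tendsto_pow_atTop_nhds_zero_of_lt_one (by norm_num)
      (by norm_num : (1 / 2 : ℝ) < 1)).const_mul 2
  refine hradius.frequently (Frequently.of_forall fun n => ?_)
  have := (ENNReal.ofReal_le_iff_le_toReal (measure_ne_top _ _)).1 (hball x hx n)
  rwa [mul_pow, div_mul_eq_mul_div, mul_div_assoc, mul_div_cancel_left₀ _ (by positivity)]

lemma MetricRegular.metricRegularStar {X : Type*} [MetricSpace X] [MeasurableSpace X]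
    [OpensMeasurableSpace X] (hX : HasFiniteBoxDimension X) {μ : Measure X} [IsFiniteMeasure μ]
    [μ.InnerRegularCompactLTTop] {β γ : ℝ} (hγ : 0 ≤ γ) (hβγ : β < γ) (h : MetricRegular γ μ) :
    MetricRegularStar β μ := by
  intro ε hε
  have := hX.secondCountableTopology
  obtain ⟨α, hβα, hαγ⟩ := exists_between hβγ
  obtain ⟨K, hK, hKε, hpot⟩ := h.exists_isCompact_metricPotential_lt_top hγ
    (ENNReal.ofReal_pos.2 (half_pos hε)).ne'
  obtain ⟨K', hK'K, hK', hloss, c, hc, k, hlower⟩ :=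
    hX.exists_isCompact_subset_frequently_le_measure_ball μ hK (half_pos hε)
  refine ⟨α, hβα, K', hK', ?_, fun x hx => ?_⟩
  · calc μ K'ᶜ ≤ μ (Kᶜ ∪ K \ K') := measure_mono fun x hx => by
          by_cases hxK : x ∈ K
          · exact Or.inr ⟨hxK, hx⟩
          · exact Or.inl hxK
      _ ≤ μ Kᶜ + μ (K \ K') := measure_union_le _ _
      _ < ENNReal.ofReal (ε / 2) + ENNReal.ofReal (ε / 2) :=
          ENNReal.add_lt_add_of_lt_of_le (measure_ne_top μ _) hKε hloss
      _ = ENNReal.ofReal ε := by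
          rw [← ENNReal.ofReal_add (half_pos hε).le (half_pos hε).le, add_halves]
  · exact le_lowerLocalDim_of_metricPotential_lt_top hγ hαγ
      ((metricPotential_mono_measure (Measure.restrict_mono_set μ hK'K)).trans_lt
        (hpot x (hK'K hx))) hc (hlower x hx)

lemma MetricRegularStar.metricRegular {X : Type*} [MetricSpace X] [SecondCountableTopology X]
    [MeasurableSpace X] [OpensMeasurableSpace X] {μ : Measure X} [IsFiniteMeasure μ] {β : ℝ}
    (hβ : 0 < β) (h : MetricRegularStar β μ) : MetricRegular β μ := by
  choose γ hγ K hK hKμ hdim using fun n : ℕ => h (1 / ((n : ℝ) + 1)) (by positivity)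
  have hlim : Tendsto (fun n : ℕ => ENNReal.ofReal (1 / ((n : ℝ) + 1))) atTop (𝓝 0) := by
    simpa using ENNReal.tendsto_ofReal tendsto_one_div_add_atTop_nhds_zero_nat
  have hcov : μ (⋃ n, K n)ᶜ = 0 := le_antisymm (ge_of_tendsto' hlim fun n =>
    (measure_mono (compl_subset_compl.2 (subset_iUnion K n))).trans (hKμ n).le) zero_le
  exact metricRegular_of_metricPotential_lt_top (fun n => (hK n).measurableSet) hcov
    fun n x hx => metricPotential_lt_top_of_lt_lowerLocalDim hβ ((hγ n).trans_le (hdim n x hx))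

theorem stmt_19_general {X : Type*} [MetricSpace X] (hX : HasFiniteBoxDimension X)
    [MeasurableSpace X] [OpensMeasurableSpace X] {β : ℝ} (hβ : 0 < β) (μ : Measure X)
    [IsFiniteMeasure μ] [μ.InnerRegularCompactLTTop] :
    ((∃ γ : ℝ, β < γ ∧ MetricRegular γ μ) → MetricRegularStar β μ) ∧
    (MetricRegularStar β μ → MetricRegular β μ) := by
  have := hX.secondCountableTopology
  exact ⟨fun ⟨_, hγ, h⟩ => h.metricRegularStar hX (hβ.trans hγ).le hγ, fun h => h.metricRegular hβ⟩

section AddCircle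

variable {p : ℝ} [hp : Fact (0 < p)]

lemma exists_coe_eq_and_norm_eq_abs (u : AddCircle p) :
    ∃ x : ℝ, (x : AddCircle p) = u ∧ |x| ≤ p / 2 ∧ ‖u‖ = |x| := by
  obtain ⟨x, hx, rfl⟩ : u ∈ ((↑) : ℝ → AddCircle p) '' Ioc (-(p / 2)) (-(p / 2) + p) := by
    rw [AddCircle.coe_image_Ioc_eq]
    trivial
  have hxp : |x| ≤ p / 2 := abs_le.2 ⟨hx.1.le, by linarith [hx.2]⟩
  exact ⟨x, rfl, hxp, (AddCircle.norm_coe_eq_abs_iff _ hp.out.ne').2 (by rwa [abs_of_pos hp.out])⟩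

lemma exists_lt_norm_sub_coe_mul_div_le (u : AddCircle p) {N : ℕ} (hN : 0 < N) :
    ∃ k < N, ‖u - ((k * (p / N) : ℝ) : AddCircle p)‖ ≤ p / N := by
  obtain ⟨x, hx, rfl⟩ : u ∈ ((↑) : ℝ → AddCircle p) '' Ico 0 (0 + p) := by
    rw [AddCircle.coe_image_Ico_eq]
    trivial
  have hp0 : 0 < p := hp.out
  have hN0 : (0 : ℝ) < N := by positivity
  have hq0 : 0 ≤ x / (p / N) := div_nonneg hx.1 (by positivity)
  have hqN : x / (p / N) < N := by
    rw [div_lt_iff₀ (by positivity), mul_div_cancel₀ _ hN0.ne']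
    linarith [hx.2]
  refine ⟨⌊x / (p / N)⌋₊, (Nat.floor_lt hq0).2 hqN, ?_⟩
  have hfloor_le := (le_div_iff₀ (by positivity)).1 (Nat.floor_le hq0)
  have hlt_floor := (div_lt_iff₀ (by positivity)).1 (Nat.lt_floor_add_one (x / (p / N)))
  rw [← AddCircle.coe_sub]
  refine QuotientAddGroup.norm_mk_le_norm.trans ?_
  rw [Real.norm_eq_abs, abs_of_nonneg (sub_nonneg.2 hfloor_le)]
  linarith

lemma hasFiniteBoxDimension_addCircle : HasFiniteBoxDimension (AddCircle p) := by
  classical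
  refine ⟨1, ⌈p⌉₊ + 1, fun r hr hr1 => ?_⟩
  have hp0 : 0 < p := hp.out
  let N := ⌊p / r⌋₊ + 1
  have hN0 : (0 : ℝ) < N := by positivity
  have hmesh : p / N < r := by
    rw [div_lt_iff₀ hN0, mul_comm, ← div_lt_iff₀ hr]
    exact_mod_cast Nat.lt_floor_add_one (p / r)
  let s := (Finset.range N).image fun k : ℕ => ((k * (p / N) : ℝ) : AddCircle p)
  have hcard : s.card ≤ N := Finset.card_image_le.trans_eq (Finset.card_range N)
  refine ⟨s, ?_, fun u => ?_⟩
  · calc s.card * r ^ 1 ≤ N * r := by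
          rw [pow_one]
          gcongr
      _ ≤ (p / r + 1) * r := by
          gcongr
          simpa [N] using Nat.floor_le (div_pos hp0 hr).le
      _ = p + r := by field_simp
      _ ≤ (⌈p⌉₊ + 1 : ℕ) := by
          push_cast
          linarith [Nat.le_ceil p]
  · obtain ⟨k, hk, hdist⟩ := exists_lt_norm_sub_coe_mul_div_le u (Nat.succ_pos ⌊p / r⌋₊)
    refine ⟨_, Finset.mem_image_of_mem _ (Finset.mem_range.2 hk), ?_⟩
    rw [dist_eq_norm]
    exact hdist.trans_lt hmesh

end AddCircle

lemma sinHalfAbs_coe (x : ℝ) : sinHalfAbs (x : AddCircle (2 * π)) = |sin (x / 2)| := rfl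

lemma sinHalfAbs_le_norm (u : AddCircle (2 * π)) : sinHalfAbs u ≤ ‖u‖ := by
  obtain ⟨x, rfl, -, hx⟩ := exists_coe_eq_and_norm_eq_abs u
  rw [sinHalfAbs_coe, hx]
  have h := abs_sin_le_abs (x := x / 2)
  rw [abs_div, abs_two] at h
  linarith [abs_nonneg x]

lemma norm_div_pi_le_sinHalfAbs (u : AddCircle (2 * π)) : ‖u‖ / π ≤ sinHalfAbs u := by
  obtain ⟨x, rfl, hxπ, hx⟩ := exists_coe_eq_and_norm_eq_abs u
  rw [sinHalfAbs_coe, hx]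
  have h := mul_abs_le_abs_sin (x := x / 2) (by rw [abs_div, abs_two]; linarith)
  rw [abs_div, abs_two] at h
  calc |x| / π = 2 / π * (|x| / 2) := by ring
    _ ≤ |sin (x / 2)| := h

lemma metricEnergy_le_rieszEnergy {β : ℝ} (hβ : 0 ≤ β) (σ : Measure (AddCircle (2 * π))) :
    metricEnergy β σ ≤ rieszEnergy β σ := by
  refine lintegral_mono fun t => lintegral_mono fun s => antitone_ennreal_rpow_neg hβ ?_
  rw [edist_dist, dist_eq_norm]
  exact ENNReal.ofReal_le_ofReal (sinHalfAbs_le_norm (t - s))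

lemma rieszEnergy_le_metricEnergy {β : ℝ} (hβ : 0 ≤ β) (σ : Measure (AddCircle (2 * π))) :
    rieszEnergy β σ ≤ ENNReal.ofReal π ^ β * metricEnergy β σ := by
  have hker (t s : AddCircle (2 * π)) :
      ENNReal.ofReal (sinHalfAbs (t - s)) ^ (-β) ≤ ENNReal.ofReal π ^ β * edist t s ^ (-β) := by
    have h : edist t s / ENNReal.ofReal π ≤ ENNReal.ofReal (sinHalfAbs (t - s)) := by
      rw [edist_dist, dist_eq_norm, ← ENNReal.ofReal_div_of_pos pi_pos]
      exact ENNReal.ofReal_le_ofReal (norm_div_pi_le_sinHalfAbs (t - s))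
    calc ENNReal.ofReal (sinHalfAbs (t - s)) ^ (-β)
        ≤ (edist t s / ENNReal.ofReal π) ^ (-β) := antitone_ennreal_rpow_neg hβ h
      _ = ENNReal.ofReal π ^ β * edist t s ^ (-β) := by
        rw [ENNReal.rpow_neg, ENNReal.div_rpow_of_nonneg _ _ hβ, ENNReal.inv_div (by simp [hβ])
          (by simp [pi_pos]), div_eq_mul_inv, ENNReal.rpow_neg]
  have hC : ENNReal.ofReal π ^ β ≠ ∞ := ENNReal.rpow_ne_top_of_nonneg hβ ENNReal.ofReal_ne_top
  calc rieszEnergy β σ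
      ≤ ∫⁻ t, ∫⁻ s, ENNReal.ofReal π ^ β * edist t s ^ (-β) ∂σ ∂σ :=
        lintegral_mono fun t => lintegral_mono fun s => hker t s
    _ = ENNReal.ofReal π ^ β * metricEnergy β σ := by
        simp only [lintegral_const_mul' _ _ hC, metricEnergy, metricPotential]

lemma rieszRegular_iff_metricRegular {β : ℝ} (hβ : 0 ≤ β) {σ : Measure (AddCircle (2 * π))} :
    rieszRegular β σ ↔ MetricRegular β σ := by
  have henergy (τ : Measure (AddCircle (2 * π))) :
      rieszEnergy β τ < ∞ ↔ metricEnergy β τ < ∞ :=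
    ⟨(metricEnergy_le_rieszEnergy hβ τ).trans_lt,
      fun h => (rieszEnergy_le_metricEnergy hβ τ).trans_lt
        (ENNReal.mul_lt_top (ENNReal.rpow_lt_top_of_nonneg hβ ENNReal.ofReal_ne_top) h)⟩
  simp only [rieszRegular, MetricRegular, henergy]

/-- For every `β > 0`: `R_{β+} ⊆ R*_β ⊆ R_β`, i.e. (i) every finite Borel
measure that is `γ`-regular for some `γ > β` belongs to `R*_β`; (ii) every measure in
`R*_β` is `β`-regular. -/
theorem stmt_19 (β : ℝ) (hβ : 0 < β)
    (σ : Measure (AddCircle (2 * π))) [IsFiniteMeasure σ] :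
    ((∃ γ : ℝ, β < γ ∧ rieszRegular γ σ) → rieszRegularStar β σ) ∧
    (rieszRegularStar β σ → rieszRegular β σ) := by
  obtain ⟨regular_to_star, star_to_regular⟩ :=
    stmt_19_general hasFiniteBoxDimension_addCircle hβ σ
  exact ⟨fun ⟨γ, hγ, h⟩ =>
      regular_to_star ⟨γ, hγ, (rieszRegular_iff_metricRegular (hβ.trans hγ).le).1 h⟩,
    fun h => (rieszRegular_iff_metricRegular hβ.le).2 (star_to_regular h)⟩
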